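/- For the Weierstrass zeta function of the lattice L_ω = ω·ℤ[τ] with invariants g₂ = 0, g₃ = 1, one has ζ(5ω/6, L_ω) = 5π/(3√3·ω) + 1/√3 + √3/(∛2 − 2). -/

import Mathlib

noncomputable section

open Complex Real ComplexConjugate

/-- `τ = (−1+√−3)/2`, a primitive cube root of unity. -/
def tau : ℂ := (-1 + Real.sqrt 3 * Complex.I) / 2

/-- `√−3 = 1 + 2τ`, the square root of `−3` with positive imaginary part. -/
def sqrtm3 : ℂ := Real.sqrt 3 * Complex.I

/-- The ring of integers `O_K = ℤ[τ]` of `K = ℚ(√−3)`, as a subring of `ℂ`. -/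
def Eis : Subring ℂ := Subring.closure {tau}

/-- `τ` as an element of `ℤ[τ]`. -/
def tauO : Eis := ⟨tau, Subring.subset_closure rfl⟩

/-- `√−3` as an element of `ℤ[τ]`. -/
def sqrtm3O : Eis := 1 + 2 * tauO

/-- Membership in the lattice `L_ω = ω·ℤ[τ]`. -/
def inLattice (ω : ℝ) (z : ℂ) : Prop := ∃ a : Eis, z = (ω : ℂ) * a

/-- The Weierstrass `℘`-function of the lattice `L_ω = ω·ℤ[τ]`. -/
def wp (ω : ℝ) (z : ℂ) : ℂ :=
  1 / z ^ 2 + ∑' a : {w : ℂ // inLattice ω w ∧ w ≠ 0},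
    (1 / (z - (a : ℂ)) ^ 2 - 1 / (a : ℂ) ^ 2)

/-- The Weierstrass `ζ`-function of the lattice `L_ω = ω·ℤ[τ]`. -/
def wzeta (ω : ℝ) (z : ℂ) : ℂ :=
  1 / z + ∑' a : {w : ℂ // inLattice ω w ∧ w ≠ 0},
    (1 / (z - (a : ℂ)) + 1 / (a : ℂ) + z / (a : ℂ) ^ 2)

/-- The real cube root of 2, as a complex number. -/
def cbrt2 : ℂ := ((2 : ℝ) ^ ((1 : ℝ) / 3) : ℝ)

/-- The real cube root of 4, as a complex number. -/
def cbrt4 : ℂ := ((4 : ℝ) ^ ((1 : ℝ) / 3) : ℝ)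

/-!
Write `η = ζ(ω)`. Liouville's theorem, applied in `v`, gives the addition formula
`(ζ(z + v) + ζ(z - v) - 2ζ(z)) (℘(z) - ℘(v)) = ℘'(z)`. Since `ζ(ω/3 - ω/2) = ζ(5ω/6) - η`, taking
`z = ω/3` and `v = ω/2` reduces the claim to `η` and the values of `ζ, ℘, ℘'` at `ω/3` and of `℘` at
`ω/2`.

* Summing `ζ(ω)` along rows of the lattice gives `η = G₂(τ)/ω`, and the quasi-modularity of `G₂` at
  the elliptic point `τ` gives `G₂(τ) = 2π/√3`.
* The point `w = ω(1 - τ)/3` is fixed by `τ` modulo the lattice, so `℘(w) = 0` and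
  `(1 - τ)ζ(w) = η`. As `ω/3 ± w` are `τ`-multiples of `ω/3` modulo the lattice, the addition
  formula at `ω/3` and `w` gives `(η - 3ζ(ω/3)) ℘(ω/3) = ℘'(ω/3)` and `℘'(ω/3)² = 3g₃`, whence
  `℘(ω/3)³ = g₃`.
* `℘` is nonnegative on `(0, ω)`, so `ζ` decreases there and `2ζ(ω/3) ≥ 2ζ(ω/2) = η > 0`; this makes
  `℘'(ω/3) = -√3` and not `√3`.
-/

/-! ### The Weierstrass zeta function of a period pair -/

section

open Filter PeriodPair

variable (L : PeriodPair)

/-- The summand of the Weierstrass zeta function attached to the lattice point `l`. By the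
convention `1 / 0 = 0` it is `1 / z` for `l = 0`. -/
def weierstrassZetaTerm (l z : ℂ) : ℂ := 1 / (z - l) + 1 / l + z / l ^ 2

/-- The Weierstrass zeta function of `L` with the summand of `l₀` left out, so that it is analytic
at `l₀`; this is the zeta analogue of `℘[L - l₀]`. -/
def weierstrassZetaExcept (l₀ z : ℂ) : ℂ :=
  ∑' l : L.lattice, if (l : ℂ) = l₀ then 0 else weierstrassZetaTerm l z

/-- The Weierstrass zeta function of `L`. -/
def weierstrassZeta (z : ℂ) : ℂ := ∑' l : L.lattice, weierstrassZetaTerm l z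

lemma norm_weierstrassZetaTerm_le {r : ℝ} {z l : ℂ} (hz : ‖z‖ < r) (hl : 2 * r ≤ ‖l‖) :
    ‖weierstrassZetaTerm l z‖ ≤ 2 * r ^ 2 * ‖l‖ ^ (-3 : ℝ) := by
  have hr : 0 < r := (norm_nonneg z).trans_lt hz
  have hl_pos : 0 < ‖l‖ := by linarith
  have hl_ne : l ≠ 0 := norm_pos_iff.mp hl_pos
  have hzl : ‖l‖ / 2 ≤ ‖z - l‖ := by
    rw [norm_sub_rev]
    exact .trans (by linarith) (norm_sub_norm_le l z)
  have hzl_ne : z - l ≠ 0 := norm_pos_iff.mp (by linarith)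
  have term_eq : weierstrassZetaTerm l z = z ^ 2 / ((z - l) * l ^ 2) := by
    unfold weierstrassZetaTerm
    field_simp
    ring
  calc ‖weierstrassZetaTerm l z‖ = ‖z‖ ^ 2 / (‖z - l‖ * ‖l‖ ^ 2) := by
        rw [term_eq, norm_div, norm_mul, norm_pow, norm_pow]
    _ ≤ r ^ 2 / (‖l‖ / 2 * ‖l‖ ^ 2) := by gcongr
    _ = 2 * r ^ 2 / ‖l‖ ^ 3 := by field_simp
    _ = 2 * r ^ 2 * ‖l‖ ^ (-3 : ℝ) := by norm_cast

lemma hasSumLocallyUniformly_weierstrassZetaExcept (l₀ : ℂ) :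
    HasSumLocallyUniformly
      (fun (l : L.lattice) (z : ℂ) ↦ if (l : ℂ) = l₀ then 0 else weierstrassZetaTerm l z)
      (weierstrassZetaExcept L l₀) := by
  refine L.hasSumLocallyUniformly_aux (u := fun r l ↦ 2 * r ^ 2 * ‖l‖ ^ (-3 : ℝ)) _
    (fun _ _ ↦ (ZLattice.summable_norm_rpow _ _ (by simp; norm_num)).mul_left _) fun r hr ↦
    eventually_atTop.mpr ⟨2 * r, ?_⟩
  rintro _ hl z hz l rfl
  split_ifs
  · rw [norm_zero]
    positivity
  · exact norm_weierstrassZetaTerm_le hz hl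

lemma hasDerivAt_weierstrassZetaTerm {l z : ℂ} (h : z ≠ l) :
    HasDerivAt (weierstrassZetaTerm l) (-(1 / (z - l) ^ 2 - 1 / l ^ 2)) z := by
  have h_inv := ((hasDerivAt_id z).sub_const l).inv (sub_ne_zero.mpr h)
  have h_lin := (hasDerivAt_id z).div_const (l ^ 2)
  convert! (h_inv.add_const (1 / l)).add h_lin using 1
  · ext w
    simp [weierstrassZetaTerm]
  · simp only [id]
    ring

lemma hasDerivAt_weierstrassZetaExcept (l₀ : ℂ) {z : ℂ}
    (hz : z ∈ ((L.lattice : Set ℂ) \ {l₀})ᶜ) :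
    HasDerivAt (weierstrassZetaExcept L l₀) (-℘[L - l₀] z) z := by
  have h_unif : TendstoLocallyUniformlyOn
      (fun (s : Finset L.lattice) (z : ℂ) ↦
        -∑ l ∈ s, if (l : ℂ) = l₀ then 0 else (1 / (z - l) ^ 2 - 1 / (l : ℂ) ^ 2))
      (fun z ↦ -℘[L - l₀] z) atTop ((L.lattice : Set ℂ) \ {l₀})ᶜ := by
    simpa using! ((L.hasSumLocallyUniformly_weierstrassPExcept l₀).tendstoLocallyUniformlyOn
      (s := ((L.lattice : Set ℂ) \ {l₀})ᶜ)).neg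
  refine hasDerivAt_of_tendstoLocallyUniformlyOn L.isOpen_compl_lattice_sdiff h_unif
    (.of_forall fun s z hz ↦ ?_)
    (fun z _ ↦ (hasSumLocallyUniformly_weierstrassZetaExcept L l₀).hasSum) hz
  rw [← Finset.sum_neg_distrib]
  refine HasDerivAt.fun_sum fun l _ ↦ ?_
  by_cases hl : (l : ℂ) = l₀
  · simpa only [hl, if_true, neg_zero] using hasDerivAt_const z (0 : ℂ)
  · simp only [hl, if_false]
    refine hasDerivAt_weierstrassZetaTerm ?_
    rintro rfl
    exact hz ⟨l.2, hl⟩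

lemma weierstrassZetaExcept_of_notMem {l₀ : ℂ} (h : l₀ ∉ L.lattice) :
    weierstrassZetaExcept L l₀ = weierstrassZeta L :=
  funext fun _ ↦ tsum_congr fun l ↦ if_neg (ne_of_mem_of_not_mem l.2 h)

lemma summable_weierstrassZetaTerm (z : ℂ) :
    Summable fun l : L.lattice ↦ weierstrassZetaTerm l z := by
  refine ((hasSumLocallyUniformly_weierstrassZetaExcept L (L.ω₁ / 2)).hasSum
    (x := z)).summable.congr fun l ↦ if_neg ?_
  exact ne_of_mem_of_not_mem l.2 L.ω₁_div_two_notMem_lattice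

lemma weierstrassZetaExcept_add (l₀ : L.lattice) (z : ℂ) :
    weierstrassZetaExcept L l₀ z + weierstrassZetaTerm l₀ z = weierstrassZeta L z := by
  simp only [weierstrassZeta, weierstrassZetaExcept,
    (summable_weierstrassZetaTerm L z).tsum_eq_add_tsum_ite l₀, Subtype.ext_iff]
  exact add_comm _ _

lemma hasDerivAt_weierstrassZeta {z : ℂ} (hz : z ∉ L.lattice) :
    HasDerivAt (weierstrassZeta L) (-℘[L] z) z := by
  have h := hasDerivAt_weierstrassZetaExcept L (L.ω₁ / 2) (z := z) fun h ↦ hz h.1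
  rwa [weierstrassZetaExcept_of_notMem L L.ω₁_div_two_notMem_lattice,
    L.weierstrassPExcept_of_notMem _ L.ω₁_div_two_notMem_lattice] at h

-- At `p` itself the derivative is the finite part of `-℘[L]`, which by `1 / 0 = 0` is `-℘[L] p`.
lemma hasDerivAt_weierstrassZeta_sub_inv (p : L.lattice) :
    HasDerivAt (fun z ↦ weierstrassZeta L z - (z - p)⁻¹) (-℘[L] p) p := by
  have h := ((hasDerivAt_weierstrassZetaExcept L p (z := p) (by simp)).add_const
    (1 / (p : ℂ))).add ((hasDerivAt_id (p : ℂ)).div_const ((p : ℂ) ^ 2))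
  convert! h using 1
  · ext z
    simp only [← weierstrassZetaExcept_add L p z, weierstrassZetaTerm, Pi.add_apply, id]
    ring
  · simp [← L.weierstrassPExcept_add p p]
    ring

lemma weierstrassZeta_neg (z : ℂ) : weierstrassZeta L (-z) = -weierstrassZeta L z := by
  unfold weierstrassZeta
  rw [← (Equiv.neg L.lattice).tsum_eq, ← tsum_neg]
  refine tsum_congr fun l ↦ ?_
  simp only [Equiv.neg_apply, NegMemClass.coe_neg, weierstrassZetaTerm,
    neg_sub_neg, ← neg_sub z, div_neg, neg_div, neg_sq]
  ring

lemma weierstrassZeta_zero : weierstrassZeta L 0 = 0 := by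
  simp [weierstrassZeta, weierstrassZetaTerm]

/-- By `1 / 0 = 0` the zeta function takes its finite part as its value at a lattice point, so the
formula has no exceptions and the quasi-period of `l` is `weierstrassZeta L l`. -/
lemma weierstrassZeta_add_coe (z : ℂ) (l : L.lattice) :
    weierstrassZeta L (z + l) = weierstrassZeta L z + weierstrassZeta L l := by
  have h_deriv (w : ℂ) :
      HasDerivAt (fun w ↦ weierstrassZeta L (w + l) - weierstrassZeta L w) 0 w := by
    by_cases hw : w ∈ L.lattice
    · have h_shift := (hasDerivAt_weierstrassZeta_sub_inv L (⟨w, hw⟩ + l)).comp_add_const w (l : ℂ)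
      have h := h_shift.sub (hasDerivAt_weierstrassZeta_sub_inv L ⟨w, hw⟩)
      simp only [Submodule.coe_add, L.weierstrassP_add_coe, sub_self] at h
      refine h.congr_of_eventuallyEq (.of_forall fun x ↦ ?_)
      simp
    · have h_shift := (hasDerivAt_weierstrassZeta L
        (mt (L.lattice.add_mem_iff_left l.2).mp hw)).comp_add_const w (l : ℂ)
      simpa only [L.weierstrassP_add_coe, sub_self] using!
        h_shift.sub (hasDerivAt_weierstrassZeta L hw)
  have h_const := is_const_of_deriv_eq_zero (fun w ↦ (h_deriv w).differentiableAt)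
    (fun w ↦ (h_deriv w).deriv) z 0
  simp only [zero_add, weierstrassZeta_zero, sub_zero] at h_const
  linear_combination h_const

end

/-! ### Liouville's theorem -/

section

open Filter Topology

variable (L : PeriodPair)

lemma analyticAt_weierstrassZetaExcept (p : ℂ) : AnalyticAt ℂ (weierstrassZetaExcept L p) p := by
  refine DifferentiableOn.analyticAt (s := ((L.lattice : Set ℂ) \ {p})ᶜ) (fun z hz ↦ ?_)
    (L.compl_lattice_sdiff_singleton_mem_nhds p)
  exact (hasDerivAt_weierstrassZetaExcept L p hz).differentiableAt.differentiableWithinAt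

lemma meromorphic_weierstrassZeta : Meromorphic (weierstrassZeta L) := fun p ↦ by
  by_cases hp : p ∈ L.lattice
  · have h_term : MeromorphicAt (weierstrassZetaTerm p) p := by
      unfold weierstrassZetaTerm
      fun_prop
    refine ((analyticAt_weierstrassZetaExcept L p).meromorphicAt.add h_term).congr ?_
    exact .of_forall fun z ↦ weierstrassZetaExcept_add L ⟨p, hp⟩ z
  · rw [← weierstrassZetaExcept_of_notMem L hp]
    exact (analyticAt_weierstrassZetaExcept L p).meromorphicAt

lemma exists_tendsto_sub_mul_weierstrassZeta (p : ℂ) :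
    ∃ k, Tendsto (fun z ↦ (z - p) * weierstrassZeta L z) (𝓝[≠] p) (𝓝 k) := by
  have h_sub : Tendsto (fun z : ℂ ↦ z - p) (𝓝[≠] p) (𝓝 0) :=
    tendsto_nhdsWithin_of_tendsto_nhds (by simpa using (continuous_sub_right p).tendsto p)
  by_cases hp : p ∈ L.lattice
  · have h_reg := tendsto_nhdsWithin_of_tendsto_nhds (s := {p}ᶜ)
      (hasDerivAt_weierstrassZeta_sub_inv L ⟨p, hp⟩).continuousAt.tendsto
    refine ⟨_, ((h_sub.mul h_reg).add_const 1).congr' ?_⟩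
    filter_upwards [self_mem_nhdsWithin] with z hz
    have : z - p ≠ 0 := sub_ne_zero.mpr hz
    field_simp
    ring
  · exact ⟨_, h_sub.mul (tendsto_nhdsWithin_of_tendsto_nhds
      (hasDerivAt_weierstrassZeta L hp).continuousAt.tendsto)⟩

/-- Liouville's theorem for elliptic functions, in the form in which `F` may take arbitrary values
at its removable singularities. -/
theorem exists_forall_tendsto_of_elliptic {F : ℂ → ℂ} (hF : Meromorphic F)
    (h_periodic : ∀ z, ∀ l ∈ L.lattice, F (z + l) = F z)
    (h_lim : ∀ p, ∃ c, Tendsto F (𝓝[≠] p) (𝓝 c)) :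
    ∃ c, ∀ p, Tendsto F (𝓝[≠] p) (𝓝 c) := by
  set G := toMeromorphicNFOn F Set.univ
  have hGF (p : ℂ) : G =ᶠ[𝓝[≠] p] F :=
    hF.meromorphicOn.toMeromorphicNFOn_eq_self_on_nhdsNE (Set.mem_univ p)
  have hG_lim (p : ℂ) : ∃ c, Tendsto G (𝓝[≠] p) (𝓝 c) :=
    (h_lim p).imp fun c hc ↦ hc.congr' (hGF p).symm
  have hG_analytic (p : ℂ) : AnalyticAt ℂ G p := by
    have hNF := meromorphicNFOn_toMeromorphicNFOn F Set.univ (Set.mem_univ p)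
    exact hNF.meromorphicOrderAt_nonneg_iff_analyticAt.mp
      ((tendsto_nhds_iff_meromorphicOrderAt_nonneg hNF.meromorphicAt).mp (hG_lim p))
  have hG : Differentiable ℂ G := fun p ↦ (hG_analytic p).differentiableAt
  have hG_periodic (z w : ℂ) (hw : w ∈ L.lattice) : G (z + w) = G z := by
    have h_shift : Tendsto (· + w) (𝓝[≠] z) (𝓝[≠] (z + w)) := by
      refine ((continuous_add_const w).tendsto z).inf (tendsto_principal_principal.mpr ?_)
      simp
    have h_eq : (G <| · + w) =ᶠ[𝓝[≠] z] G := by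
      filter_upwards [h_shift.eventually (hGF (z + w)), hGF z] with x hxw hx
      rw [hxw, hx, h_periodic x w hw]
    exact (((hG.continuous.comp (continuous_add_const w)).continuousAt
      ).eventuallyEq_nhds_iff_eventuallyEq_nhdsNE hG.continuous.continuousAt |>.mp h_eq).eq_of_nhds
  have hG_bounded : Bornology.IsBounded (Set.range G) :=
    (IsZLattice.isCompact_range_of_periodic L.lattice G hG.continuous hG_periodic).isBounded
  refine ⟨G 0, fun p ↦ ?_⟩
  rw [hG.apply_eq_apply_of_bounded hG_bounded 0 p]
  exact (tendsto_nhdsWithin_of_tendsto_nhds (hG.continuous.tendsto p)).congr' (hGF p)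

end

/-! ### The addition formula -/

section

open Filter Topology Asymptotics PeriodPair

lemma tendsto_div_sub_sq_of_hasDerivAt {𝕜 : Type*} [RCLike 𝕜] {f f' : 𝕜 → 𝕜} {p c : 𝕜}
    (hf : ∀ᶠ v in 𝓝 p, HasDerivAt f (f' v) v) (hf' : HasDerivAt f' c p)
    (hfp : f p = 0) (hfp' : f' p = 0) :
    Tendsto (fun v ↦ f v / (v - p) ^ 2) (𝓝[≠] p) (𝓝 (c / 2)) := by
  obtain ⟨r, hr, hf⟩ := Metric.eventually_nhds_iff_ball.mp hf
  have h_ball : 𝓝[Metric.ball p r] p = 𝓝 p :=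
    Metric.isOpen_ball.nhdsWithin_eq (Metric.mem_ball_self hr)
  set g : 𝕜 → 𝕜 := fun v ↦ f v - c / 2 * (v - p) ^ 2
  have hg (v : 𝕜) (hv : v ∈ Metric.ball p r) : HasDerivAt g (f' v - (v - p) * c) v := by
    have h_sq := (((hasDerivAt_id v).sub_const p).fun_pow 2).const_mul (c / 2)
    refine ((hf v hv).sub h_sq).congr_deriv ?_
    simp only [id]
    push_cast
    ring
  have hg' : (fun v ↦ ContinuousLinearMap.toSpanSingleton 𝕜 (f' v - (v - p) * c))
      =o[𝓝[Metric.ball p r] p] fun v ↦ ‖v - p‖ ^ 1 := by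
    rw [h_ball, ← isLittleO_norm_left]
    simpa [hfp'] using hf'.isLittleO.norm_left.norm_right
  have h_little : (fun v ↦ g v - g p) =o[𝓝[≠] p] fun v ↦ (v - p) ^ 2 := by
    have h := (convex_ball p r).isLittleO_pow_succ (Metric.mem_ball_self hr)
      (fun v hv ↦ (hg v hv).hasFDerivAt.hasFDerivWithinAt) hg'
    rw [h_ball] at h
    simpa only [← norm_pow, isLittleO_norm_right] using! h.mono nhdsWithin_le_nhds
  have h_lim := h_little.tendsto_div_nhds_zero.add_const (c / 2)
  rw [zero_add] at h_lim
  refine h_lim.congr' ?_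
  filter_upwards [self_mem_nhdsWithin] with v hv
  have : v - p ≠ 0 := sub_ne_zero.mpr hv
  simp only [g, hfp]
  field_simp
  ring

variable (L : PeriodPair)

lemma weierstrassZeta_sub_coe (z : ℂ) (l : L.lattice) :
    weierstrassZeta L (z - l) = weierstrassZeta L z - weierstrassZeta L l := by
  simpa [eq_sub_iff_add_eq] using (weierstrassZeta_add_coe L (z - l) l).symm

/-- The symmetric second difference of the zeta function at `z`, as a function of the increment
`v`. It is elliptic in `v`, which makes it the starting point of the addition formula. -/
def weierstrassZetaSecondDiff (z v : ℂ) : ℂ :=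
  weierstrassZeta L (z + v) + weierstrassZeta L (z - v) - 2 * weierstrassZeta L z

lemma weierstrassZetaSecondDiff_add_coe (z v : ℂ) (l : L.lattice) :
    weierstrassZetaSecondDiff L z (v + l) = weierstrassZetaSecondDiff L z v := by
  simp only [weierstrassZetaSecondDiff, ← add_assoc, ← sub_sub, weierstrassZeta_add_coe,
    weierstrassZeta_sub_coe]
  ring

lemma hasDerivAt_weierstrassZetaSecondDiff {z v : ℂ} (h_add : z + v ∉ L.lattice)
    (h_sub : z - v ∉ L.lattice) :
    HasDerivAt (weierstrassZetaSecondDiff L z) (℘[L] (z - v) - ℘[L] (z + v)) v := by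
  have h := (((hasDerivAt_weierstrassZeta L h_add).comp_const_add z v).add
    ((hasDerivAt_weierstrassZeta L h_sub).comp_const_sub z v)).sub_const
    (2 * weierstrassZeta L z)
  convert! h using 1
  ring

lemma hasDerivAt_weierstrassP {z : ℂ} (hz : z ∉ L.lattice) : HasDerivAt ℘[L] (℘'[L] z) z := by
  rw [← L.deriv_weierstrassP]
  exact (L.analyticOnNhd_weierstrassP z hz).differentiableAt.hasDerivAt

lemma tendsto_weierstrassZetaSecondDiff_div_sq {z : ℂ} (hz : z ∉ L.lattice) :
    Tendsto (fun v ↦ weierstrassZetaSecondDiff L z v / v ^ 2) (𝓝[≠] 0) (𝓝 (-℘'[L] z)) := by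
  have h_mem : ∀ᶠ v in 𝓝 (0 : ℂ), z + v ∉ L.lattice ∧ z - v ∉ L.lattice := by
    have h_open := L.isClosed_lattice.isOpen_compl
    refine .and ?_ ?_
    · exact (continuous_const_add z).continuousAt.eventually_mem (h_open.mem_nhds (by simpa))
    · exact (continuous_sub_left z).continuousAt.eventually_mem (h_open.mem_nhds (by simpa))
  have h_deriv : HasDerivAt (fun v ↦ ℘[L] (z - v) - ℘[L] (z + v)) (-2 * ℘'[L] z) 0 := by
    refine HasDerivAt.congr_deriv (.sub (.comp_const_sub z 0 ?_) (.comp_const_add z 0 ?_))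
      (by ring : -℘'[L] z - ℘'[L] z = -2 * ℘'[L] z)
    · simpa using hasDerivAt_weierstrassP L hz
    · simpa using hasDerivAt_weierstrassP L hz
  have h := tendsto_div_sub_sq_of_hasDerivAt (f := weierstrassZetaSecondDiff L z)
    (h_mem.mono fun v hv ↦ hasDerivAt_weierstrassZetaSecondDiff L hv.1 hv.2) h_deriv
    (by simp [weierstrassZetaSecondDiff, two_mul]) (by simp)
  convert h using 2
  · simp
  · ring

lemma tendsto_sq_mul_weierstrassP : Tendsto (fun v ↦ v ^ 2 * ℘[L] v) (𝓝[≠] 0) (𝓝 1) := by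
  have h_reg : ContinuousAt (fun v ↦ v ^ 2 * ℘[L - (0 : ℂ)] v + 1) 0 :=
    ((continuous_pow 2).continuousAt.mul
      (L.analyticAt_weierstrassPExcept 0).continuousAt).add continuousAt_const
  have h_lim : Tendsto (fun v ↦ v ^ 2 * ℘[L - (0 : ℂ)] v + 1) (𝓝[≠] 0) (𝓝 1) :=
    tendsto_nhdsWithin_of_tendsto_nhds (by simpa using! h_reg.tendsto)
  refine h_lim.congr' ?_
  filter_upwards [self_mem_nhdsWithin] with v hv
  rw [← L.weierstrassPExcept_add 0]
  have hv : v ≠ 0 := hv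
  simp
  field_simp

lemma exists_tendsto_sub_mul_weierstrassZetaSecondDiff (z p : ℂ) :
    ∃ k, Tendsto (fun v ↦ (v - p) * weierstrassZetaSecondDiff L z v) (𝓝[≠] p) (𝓝 k) := by
  obtain ⟨k₁, h₁⟩ := exists_tendsto_sub_mul_weierstrassZeta L (z + p)
  obtain ⟨k₂, h₂⟩ := exists_tendsto_sub_mul_weierstrassZeta L (z - p)
  have h_add : Tendsto (z + ·) (𝓝[≠] p) (𝓝[≠] (z + p)) :=
    ((continuous_const_add z).tendsto p).inf (tendsto_principal_principal.mpr (by simp))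
  have h_sub : Tendsto (z - ·) (𝓝[≠] p) (𝓝[≠] (z - p)) :=
    ((continuous_sub_left z).tendsto p).inf (tendsto_principal_principal.mpr (by simp))
  have h_const : Tendsto (fun v ↦ (v - p) * (2 * weierstrassZeta L z)) (𝓝[≠] p) (𝓝 0) :=
    tendsto_nhdsWithin_of_tendsto_nhds
      (by simpa using ((continuous_sub_right p).mul_const (2 * weierstrassZeta L z)).tendsto p)
  refine ⟨_, (((h₁.comp h_add).sub (h₂.comp h_sub)).sub h_const).congr fun v ↦ ?_⟩
  simp only [Function.comp_apply, weierstrassZetaSecondDiff]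
  ring

lemma weierstrassP_eq_of_add_mem {z v : ℂ} (h : z + v ∈ L.lattice) : ℘[L] v = ℘[L] z := by
  rw [← L.weierstrassP_neg v, ← L.weierstrassP_add_coe (-v) ⟨z + v, h⟩]
  simp

lemma weierstrassP_eq_of_sub_mem {z v : ℂ} (h : z - v ∈ L.lattice) : ℘[L] v = ℘[L] z := by
  rw [← L.weierstrassP_add_coe v ⟨z - v, h⟩]
  simp

lemma continuousAt_weierstrassZetaSecondDiff_mul {z v : ℂ} (hv : v ∉ L.lattice)
    (h_add : z + v ∉ L.lattice) (h_sub : z - v ∉ L.lattice) :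
    ContinuousAt (fun v ↦ weierstrassZetaSecondDiff L z v * (℘[L] z - ℘[L] v)) v :=
  (hasDerivAt_weierstrassZetaSecondDiff L h_add h_sub).continuousAt.mul
    (continuousAt_const.sub (hasDerivAt_weierstrassP L hv).continuousAt)

lemma tendsto_weierstrassZetaSecondDiff_mul_zero {z : ℂ} (hz : z ∉ L.lattice) :
    Tendsto (fun v ↦ weierstrassZetaSecondDiff L z v * (℘[L] z - ℘[L] v)) (𝓝[≠] 0)
      (𝓝 (℘'[L] z)) := by
  have h_sq : Tendsto (fun v : ℂ ↦ v ^ 2 * ℘[L] z) (𝓝[≠] 0) (𝓝 0) :=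
    tendsto_nhdsWithin_of_tendsto_nhds
      (by simpa using ((continuous_pow 2).mul_const (℘[L] z)).tendsto (0 : ℂ))
  have h := (tendsto_weierstrassZetaSecondDiff_div_sq L hz).mul
    (h_sq.sub (tendsto_sq_mul_weierstrassP L))
  rw [zero_sub, neg_mul_neg, mul_one] at h
  refine h.congr' ?_
  filter_upwards [self_mem_nhdsWithin] with v hv
  have hv : v ≠ 0 := hv
  field_simp

-- At `p ≡ ±z` the simple pole of the second difference meets a zero of `℘[L] z - ℘[L] v`.
lemma exists_tendsto_weierstrassZetaSecondDiff_mul {z p : ℂ} (hz : z ∉ L.lattice) :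
    ∃ c, Tendsto (fun v ↦ weierstrassZetaSecondDiff L z v * (℘[L] z - ℘[L] v)) (𝓝[≠] p)
      (𝓝 c) := by
  by_cases hp : p ∈ L.lattice
  · have h_shift : Tendsto (· - p) (𝓝[≠] p) (𝓝[≠] 0) := by
      rw [← sub_self p]
      exact ((continuous_sub_right p).tendsto p).inf (tendsto_principal_principal.mpr
        (by simp [sub_eq_zero]))
    refine ⟨_, ((tendsto_weierstrassZetaSecondDiff_mul_zero L hz).comp h_shift).congr fun v ↦ ?_⟩
    have h_diff := weierstrassZetaSecondDiff_add_coe L z (v - p) ⟨p, hp⟩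
    have h_P := L.weierstrassP_sub_coe v ⟨p, hp⟩
    simp only [sub_add_cancel] at h_diff h_P
    simp [h_diff, h_P]
  by_cases h_regular : z + p ∉ L.lattice ∧ z - p ∉ L.lattice
  · exact ⟨_, tendsto_nhdsWithin_of_tendsto_nhds
      (continuousAt_weierstrassZetaSecondDiff_mul L hp h_regular.1 h_regular.2).tendsto⟩
  · have h_eq : ℘[L] p = ℘[L] z := by
      rcases not_and_or.mp h_regular with h | h
      · exact weierstrassP_eq_of_add_mem L (not_not.mp h)
      · exact weierstrassP_eq_of_sub_mem L (not_not.mp h)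
    obtain ⟨k, hk⟩ := exists_tendsto_sub_mul_weierstrassZetaSecondDiff L z p
    refine ⟨_, (hk.mul (hasDerivAt_iff_tendsto_slope.mp (hasDerivAt_weierstrassP L hp)).neg).congr'
      ?_⟩
    filter_upwards [self_mem_nhdsWithin] with v hv
    have : v - p ≠ 0 := sub_ne_zero.mpr hv
    rw [slope_def_field, h_eq]
    field_simp
    ring

theorem weierstrassZeta_addition {z v : ℂ} (hz : z ∉ L.lattice) (hv : v ∉ L.lattice)
    (h_add : z + v ∉ L.lattice) (h_sub : z - v ∉ L.lattice) :
    (weierstrassZeta L (z + v) + weierstrassZeta L (z - v) - 2 * weierstrassZeta L z) *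
      (℘[L] z - ℘[L] v) = ℘'[L] z := by
  have h_mero : Meromorphic fun v ↦ weierstrassZetaSecondDiff L z v * (℘[L] z - ℘[L] v) := by
    have h_zeta_add : Meromorphic fun v ↦ weierstrassZeta L (z + v) := fun p ↦
      (meromorphic_weierstrassZeta L (z + p)).comp_analyticAt (by fun_prop)
    have h_zeta_sub : Meromorphic fun v ↦ weierstrassZeta L (z - v) := fun p ↦
      (meromorphic_weierstrassZeta L (z - p)).comp_analyticAt (by fun_prop)
    exact ((h_zeta_add.add h_zeta_sub).sub (.const _)).mul
      ((Meromorphic.const _).sub L.meromorphic_weierstrassP)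
  obtain ⟨c, hc⟩ := exists_forall_tendsto_of_elliptic L h_mero
    (fun v l hl ↦ by
      rw [weierstrassZetaSecondDiff_add_coe L z v ⟨l, hl⟩, L.weierstrassP_add_coe v ⟨l, hl⟩])
    (fun p ↦ exists_tendsto_weierstrassZetaSecondDiff_mul L hz)
  have h_zero : c = ℘'[L] z :=
    tendsto_nhds_unique (hc 0) (tendsto_weierstrassZetaSecondDiff_mul_zero L hz)
  rw [← h_zero]
  exact tendsto_nhds_unique (tendsto_nhdsWithin_of_tendsto_nhds
    (continuousAt_weierstrassZetaSecondDiff_mul L hv h_add h_sub).tendsto) (hc v)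

end

/-! ### The quasi-period of `ω₁` -/

section

open PeriodPair EisensteinSeries ModularForm
open UpperHalfPlane hiding I

variable (L : PeriodPair)

lemma tsum_one_div_linear_sub_one_div_linear_succ (z : ℍ) (b : ℤ) :
    ∑' a : ℤ, (1 / ((b : ℂ) * z + a) - 1 / (b * z + a + 1)) = 0 := by
  rw [← tsum_eq_of_summable_unconditional (L := SummationFilter.symmetricIco ℤ)
    (summable_right_one_div_linear_sub_one_div_linear_succ z b)]
  exact tsum_symmetricIco_linear_sub_linear_add_one_eq_zero z b

/-- The lattice enumerated along rows: `(b, a)` is sent to `-(a ω₁ + b ω₂)`. -/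
def latticeRowEquiv : ℤ × ℤ ≃ L.lattice :=
  ((Equiv.prodComm ℤ ℤ).trans L.latticeEquivProd.symm.toEquiv).trans (Equiv.neg L.lattice)

lemma coe_latticeRowEquiv (b a : ℤ) :
    (latticeRowEquiv L (b, a) : ℂ) = -(a * L.ω₁ + b * L.ω₂) :=
  congrArg Neg.neg (L.latticeEquiv_symm_apply (a, b))

lemma weierstrassZetaTerm_latticeRowEquiv {z : ℍ} (hz : L.ω₂ = L.ω₁ * z) (b a : ℤ) :
    weierstrassZetaTerm (latticeRowEquiv L (b, a)) L.ω₁ =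
      (eisSummand 2 ![b, a] z - (1 / ((b : ℂ) * z + a) - 1 / (b * z + a + 1))) / L.ω₁ := by
  have hω₁ : L.ω₁ ≠ 0 := by simpa using L.indep.ne_zero 0
  have h_lattice : (latticeRowEquiv L (b, a) : ℂ) = -(L.ω₁ * (b * z + a)) := by
    rw [coe_latticeRowEquiv, hz]
    ring
  have h_eis : eisSummand 2 ![b, a] z = ((b * z + a : ℂ)⁻¹) ^ 2 := by
    simp [eisSummand, zpow_neg]
  have h_succ : L.ω₁ + L.ω₁ * (b * z + a) = L.ω₁ * (b * z + a + 1) := by ring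
  rw [h_eis, h_lattice, weierstrassZetaTerm, sub_neg_eq_add, h_succ]
  simp only [div_eq_mul_inv, inv_neg, mul_inv, neg_sq, mul_pow, inv_pow]
  field_simp
  ring

lemma weierstrassZeta_ω₁ {z : ℍ} (hz : L.ω₂ = L.ω₁ * z) :
    weierstrassZeta L L.ω₁ = G2 z / L.ω₁ := by
  have h_summable : Summable fun p ↦ weierstrassZetaTerm (latticeRowEquiv L p) L.ω₁ :=
    (latticeRowEquiv L).summable_iff.mpr (summable_weierstrassZetaTerm L L.ω₁)
  have row_sum (b : ℤ) :
      ∑' a, weierstrassZetaTerm (latticeRowEquiv L (b, a)) L.ω₁ = e2Summand b z / L.ω₁ := by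
    simp_rw [weierstrassZetaTerm_latticeRowEquiv L hz, tsum_div_const]
    rw [(e2Summand_summable b z).tsum_sub
      (summable_right_one_div_linear_sub_one_div_linear_succ z b),
      tsum_one_div_linear_sub_one_div_linear_succ, sub_zero, e2Summand]
  have h_rows : Summable fun b ↦ e2Summand b z / L.ω₁ := h_summable.prod.congr row_sum
  calc weierstrassZeta L L.ω₁
      = ∑' p, weierstrassZetaTerm (latticeRowEquiv L p) L.ω₁ :=
        ((latticeRowEquiv L).tsum_eq _).symm
    _ = ∑' b, e2Summand b z / L.ω₁ := by
        rw [h_summable.tsum_prod]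
        exact tsum_congr row_sum
    _ = G2 z / L.ω₁ := by
        rw [← tsum_eq_of_summable_unconditional (L := SummationFilter.symmetricIcc ℤ) h_rows,
          tsum_div_const, G2]

lemma sqrt_three_sq : (√3 : ℂ) ^ 2 = 3 := by
  exact_mod_cast Real.sq_sqrt (show (0 : ℝ) ≤ 3 by norm_num)

lemma sqrt_three_ne_zero : (√3 : ℂ) ≠ 0 := by simp

lemma tau_sq : tau ^ 2 = -1 - tau := by
  unfold tau
  linear_combination (1 / 4 : ℂ) * I ^ 2 * sqrt_three_sq + (3 / 4 : ℂ) * I_sq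

lemma tau_im : tau.im = √3 / 2 := by simp [tau]

lemma tau_sub_tau_sq : tau - tau ^ 2 = √3 * I := by
  rw [tau_sq, tau]
  ring

/-- `tau` as a point of the upper half-plane. -/
def tauH : ℍ := ⟨tau, by rw [tau_im]; positivity⟩

lemma S_smul_tauH : ModularGroup.S • tauH = (1 : ℝ) +ᵥ tauH := by
  refine UpperHalfPlane.ext ?_
  rw [modular_S_smul, coe_vadd]
  change (-tau)⁻¹ = ((1 : ℝ) : ℂ) + tau
  refine inv_eq_of_mul_eq_one_right ?_
  rw [ofReal_one]
  linear_combination -tau_sq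

lemma G2_one_vadd (z : ℍ) : G2 ((1 : ℝ) +ᵥ z) = G2 z := by
  have h := congrFun G2_T_transform z
  rw [SL_slash_apply, modular_T_smul, ModularGroup.denom_apply] at h
  simpa [ModularGroup.T] using h

lemma G2_tauH : G2 tauH = 2 * π / √3 := by
  have h_fixed : G2 tauH * tau ^ 2 = G2 tauH + 2 * π * I * tau := by
    have h := G2_S_transform tauH
    have : (tauH : ℂ) ≠ 0 := tauH.ne_zero
    rw [S_smul_tauH, G2_one_vadd] at h
    change G2 tauH * (tauH : ℂ) ^ 2 = G2 tauH + 2 * π * I * (tauH : ℂ)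
    field_simp at h
    linear_combination h
  rw [eq_div_iff sqrt_three_ne_zero]
  refine mul_right_cancel₀ (mul_ne_zero tauH.ne_zero I_ne_zero) ?_
  change _ * (tau * I) = _ * (tau * I)
  linear_combination h_fixed - G2 tauH * tau * tau_sub_tau_sq + G2 tauH * (1 - tau) * tau_sq

end

/-! ### Homogeneity and conjugation -/

section

open PeriodPair

variable {L L' : PeriodPair}

lemma tsum_lattice_comp_equiv (e : ℂ ≃ ℂ) (h : ∀ z, z ∈ L.lattice ↔ e z ∈ L'.lattice)
    (f : ℂ → ℂ) : ∑' l : L.lattice, f (e l) = ∑' l : L'.lattice, f l :=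
  (e.subtypeEquiv h).tsum_eq fun l : L'.lattice ↦ f l

lemma weierstrassZeta_mul {u : ℂ} (hu : u ≠ 0) (h : ∀ z, z ∈ L.lattice ↔ u * z ∈ L'.lattice)
    (z : ℂ) : weierstrassZeta L' (u * z) = u⁻¹ * weierstrassZeta L z := by
  rw [weierstrassZeta, weierstrassZeta, ← tsum_mul_left,
    ← tsum_lattice_comp_equiv (Equiv.mulLeft₀ u hu) h (weierstrassZetaTerm · (u * z))]
  refine tsum_congr fun l ↦ ?_
  simp only [weierstrassZetaTerm, Equiv.mulLeft₀_apply, ← mul_sub, mul_pow, mul_inv,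
    div_eq_mul_inv]
  field_simp

lemma weierstrassP_mul {u : ℂ} (hu : u ≠ 0) (h : ∀ z, z ∈ L.lattice ↔ u * z ∈ L'.lattice)
    (z : ℂ) : ℘[L'] (u * z) = (u ^ 2)⁻¹ * ℘[L] z := by
  rw [weierstrassP, weierstrassP, ← tsum_mul_left, ← tsum_lattice_comp_equiv (Equiv.mulLeft₀ u hu) h
    fun l ↦ 1 / (u * z - l) ^ 2 - 1 / l ^ 2]
  refine tsum_congr fun l ↦ ?_
  simp only [Equiv.mulLeft₀_apply, ← mul_sub, mul_pow, one_div, mul_inv]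

lemma G_of_mul {u : ℂ} (hu : u ≠ 0) (h : ∀ z, z ∈ L.lattice ↔ u * z ∈ L'.lattice) (n : ℕ) :
    L'.G n = (u ^ n)⁻¹ * L.G n := by
  rw [PeriodPair.G, PeriodPair.G, ← tsum_mul_left,
    ← tsum_lattice_comp_equiv (Equiv.mulLeft₀ u hu) h fun l ↦ (l ^ n)⁻¹]
  refine tsum_congr fun l ↦ ?_
  simp only [Equiv.mulLeft₀_apply, mul_pow, mul_inv]

lemma weierstrassP_conj (h : ∀ z, z ∈ L.lattice ↔ conj z ∈ L'.lattice) (z : ℂ) :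
    ℘[L'] (conj z) = conj (℘[L] z) := by
  rw [weierstrassP, weierstrassP, conj_tsum, ← tsum_lattice_comp_equiv starRingAut.toEquiv h
    fun l ↦ 1 / (conj z - l) ^ 2 - 1 / l ^ 2]
  refine tsum_congr fun l ↦ ?_
  simp

lemma derivWeierstrassP_conj (h : ∀ z, z ∈ L.lattice ↔ conj z ∈ L'.lattice) (z : ℂ) :
    ℘'[L'] (conj z) = conj (℘'[L] z) := by
  rw [derivWeierstrassP, derivWeierstrassP, map_neg, conj_tsum,
    ← tsum_lattice_comp_equiv starRingAut.toEquiv h fun l ↦ 2 / (conj z - l) ^ 3]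
  refine congrArg Neg.neg (tsum_congr fun l ↦ ?_)
  simp [conj_ofNat]

variable (L)

lemma two_mul_weierstrassZeta_half (l : L.lattice) :
    2 * weierstrassZeta L (l / 2) = weierstrassZeta L l := by
  have h := weierstrassZeta_add_coe L (-(l / 2)) l
  rw [show -((l : ℂ) / 2) + l = l / 2 by ring, weierstrassZeta_neg] at h
  linear_combination h

lemma derivWeierstrassP_half (l : L.lattice) : ℘'[L] (l / 2) = 0 := by
  have h := L.derivWeierstrassP_add_coe (-(l / 2)) l
  rw [show -((l : ℂ) / 2) + l = l / 2 by ring, L.derivWeierstrassP_neg] at h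
  linear_combination (1 / 2 : ℂ) * h

end

/-! ### Hexagonal lattices -/

section

open PeriodPair

lemma tau_cube : tau ^ 3 = 1 := by linear_combination (tau - 1) * tau_sq

lemma tau_ne_zero : tau ≠ 0 := tauH.ne_zero

lemma tau_inv : tau⁻¹ = tau ^ 2 :=
  inv_eq_of_mul_eq_one_right (by linear_combination tau_cube)

lemma one_sub_tau_ne_zero : 1 - tau ≠ 0 := fun h ↦ by
  have h_im := congrArg Complex.im h
  simp [tau_im] at h_im

variable (L : PeriodPair)

/-- The point `ω₁(1 - τ)/3`, which multiplication by `τ` fixes modulo the lattice of `L` when `L` is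
hexagonal, that is, when `ω₂ = ω₁τ`. -/
def tauFixedPoint : ℂ := L.ω₁ * (1 - tau) / 3

lemma ω₁_div_three_notMem_lattice : L.ω₁ / 3 ∉ L.lattice := by
  simpa [inv_mul_eq_div] using
    (L.mul_ω₁_add_mul_ω₂_mem_lattice (α := 1 / 3) (β := 0)).not.mpr (by norm_num)

lemma ω₁_div_three_add_tauFixedPoint :
    L.ω₁ / 3 + tauFixedPoint L = tau * (tau * (L.ω₁ / 3)) + L.ω₁ := by
  rw [tauFixedPoint]
  linear_combination (-L.ω₁ / 3) * tau_sq

lemma ω₁_div_three_sub_tauFixedPoint : L.ω₁ / 3 - tauFixedPoint L = tau * (L.ω₁ / 3) := by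
  rw [tauFixedPoint]
  ring

variable {L} (hL : L.ω₂ = L.ω₁ * tau)
include hL

lemma tau_mul_mem_lattice {z : ℂ} (hz : z ∈ L.lattice) : tau * z ∈ L.lattice := by
  obtain ⟨m, n, rfl⟩ := PeriodPair.mem_lattice.mp hz
  refine PeriodPair.mem_lattice.mpr ⟨-n, m - n, ?_⟩
  push_cast
  rw [hL]
  linear_combination -(n * L.ω₁) * tau_sq

lemma mem_lattice_iff_tau_mul_mem (z : ℂ) : z ∈ L.lattice ↔ tau * z ∈ L.lattice := by
  refine ⟨tau_mul_mem_lattice hL, fun h ↦ ?_⟩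
  have h_cube : tau * (tau * (tau * z)) = z := by linear_combination z * tau_cube
  exact h_cube ▸ tau_mul_mem_lattice hL (tau_mul_mem_lattice hL h)

lemma weierstrassZeta_tau_mul (z : ℂ) :
    weierstrassZeta L (tau * z) = tau ^ 2 * weierstrassZeta L z := by
  rw [weierstrassZeta_mul tau_ne_zero (mem_lattice_iff_tau_mul_mem hL), tau_inv]

lemma weierstrassP_tau_mul (z : ℂ) : ℘[L] (tau * z) = tau * ℘[L] z := by
  rw [weierstrassP_mul tau_ne_zero (mem_lattice_iff_tau_mul_mem hL), ← tau_inv, inv_inv]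

lemma g₂_eq_zero_of_hexagonal : L.g₂ = 0 := by
  have h_G : (1 - tau) * L.G 4 = 0 := by
    have h := G_of_mul tau_ne_zero (mem_lattice_iff_tau_mul_mem hL) 4
    rw [show tau ^ 4 = tau by linear_combination tau * tau_cube, tau_inv] at h
    linear_combination -tau * h - L.G 4 * tau_cube
  rw [PeriodPair.g₂, (mul_eq_zero.mp h_G).resolve_left one_sub_tau_ne_zero, mul_zero]

lemma derivWeierstrassP_sq_of_hexagonal {z : ℂ} (hz : z ∉ L.lattice) :
    ℘'[L] z ^ 2 = 4 * ℘[L] z ^ 3 - L.g₃ := by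
  rw [L.derivWeierstrassP_sq z hz, g₂_eq_zero_of_hexagonal hL, zero_mul, sub_zero]

lemma weierstrassZeta_ω₁_of_hexagonal : weierstrassZeta L L.ω₁ = 2 * π / √3 / L.ω₁ := by
  rw [weierstrassZeta_ω₁ L (z := tauH) hL, G2_tauH]

lemma weierstrassZeta_ω₂_of_hexagonal :
    weierstrassZeta L L.ω₂ = tau ^ 2 * weierstrassZeta L L.ω₁ := by
  rw [hL, mul_comm, weierstrassZeta_tau_mul hL]

lemma tauFixedPoint_notMem_lattice : tauFixedPoint L ∉ L.lattice := by
  have h := (L.mul_ω₁_add_mul_ω₂_mem_lattice (α := 1 / 3) (β := -1 / 3)).not.mpr (by norm_num)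
  convert! h using 2
  rw [tauFixedPoint, hL]
  push_cast
  ring

lemma tau_mul_tauFixedPoint : tau * tauFixedPoint L = tauFixedPoint L + L.ω₂ := by
  rw [hL, tauFixedPoint]
  linear_combination (-L.ω₁ / 3) * tau_sq

lemma weierstrassP_tauFixedPoint : ℘[L] (tauFixedPoint L) = 0 := by
  have h := weierstrassP_tau_mul hL (tauFixedPoint L)
  rw [tau_mul_tauFixedPoint hL, L.weierstrassP_add_coe _ ⟨_, L.ω₂_mem_lattice⟩] at h
  refine (mul_eq_zero.mp ?_).resolve_left one_sub_tau_ne_zero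
  linear_combination h

lemma weierstrassZeta_tauFixedPoint :
    (1 - tau) * weierstrassZeta L (tauFixedPoint L) = weierstrassZeta L L.ω₁ := by
  have h := weierstrassZeta_tau_mul hL (tauFixedPoint L)
  rw [tau_mul_tauFixedPoint hL, weierstrassZeta_add_coe L _ ⟨_, L.ω₂_mem_lattice⟩,
    weierstrassZeta_ω₂_of_hexagonal hL] at h
  linear_combination -tau * h -
    (weierstrassZeta L (tauFixedPoint L) - weierstrassZeta L L.ω₁) * tau_cube

lemma ω₁_div_three_add_tauFixedPoint_notMem_lattice :
    L.ω₁ / 3 + tauFixedPoint L ∉ L.lattice := by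
  rw [ω₁_div_three_add_tauFixedPoint L, L.lattice.add_mem_iff_left L.ω₁_mem_lattice,
    ← mem_lattice_iff_tau_mul_mem hL, ← mem_lattice_iff_tau_mul_mem hL]
  exact ω₁_div_three_notMem_lattice L

lemma ω₁_div_three_sub_tauFixedPoint_notMem_lattice :
    L.ω₁ / 3 - tauFixedPoint L ∉ L.lattice := by
  rw [ω₁_div_three_sub_tauFixedPoint L, ← mem_lattice_iff_tau_mul_mem hL]
  exact ω₁_div_three_notMem_lattice L

lemma weierstrassZeta_ω₁_div_three_add_tauFixedPoint :
    weierstrassZeta L (L.ω₁ / 3 + tauFixedPoint L) =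
      tau * weierstrassZeta L (L.ω₁ / 3) + weierstrassZeta L L.ω₁ := by
  rw [ω₁_div_three_add_tauFixedPoint L, weierstrassZeta_add_coe L _ ⟨_, L.ω₁_mem_lattice⟩,
    weierstrassZeta_tau_mul hL, weierstrassZeta_tau_mul hL]
  linear_combination tau * weierstrassZeta L (L.ω₁ / 3) * tau_cube

lemma weierstrassZeta_ω₁_div_three_sub_tauFixedPoint :
    weierstrassZeta L (L.ω₁ / 3 - tauFixedPoint L) = tau ^ 2 * weierstrassZeta L (L.ω₁ / 3) := by
  rw [ω₁_div_three_sub_tauFixedPoint L, weierstrassZeta_tau_mul hL]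

lemma weierstrassZeta_mul_weierstrassP_ω₁_div_three :
    (weierstrassZeta L L.ω₁ - 3 * weierstrassZeta L (L.ω₁ / 3)) * ℘[L] (L.ω₁ / 3) =
      ℘'[L] (L.ω₁ / 3) := by
  have h := weierstrassZeta_addition L (ω₁_div_three_notMem_lattice L)
    (tauFixedPoint_notMem_lattice hL) (ω₁_div_three_add_tauFixedPoint_notMem_lattice hL)
    (ω₁_div_three_sub_tauFixedPoint_notMem_lattice hL)
  rw [weierstrassZeta_ω₁_div_three_add_tauFixedPoint hL,
    weierstrassZeta_ω₁_div_three_sub_tauFixedPoint hL, weierstrassP_tauFixedPoint hL] at h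
  linear_combination h - weierstrassZeta L (L.ω₁ / 3) * ℘[L] (L.ω₁ / 3) * tau_sq

lemma derivWeierstrassP_tauFixedPoint :
    3 * ℘'[L] (tauFixedPoint L) = (tau - tau ^ 2) * ℘'[L] (L.ω₁ / 3) := by
  have h := weierstrassZeta_addition L (tauFixedPoint_notMem_lattice hL)
    (ω₁_div_three_notMem_lattice L)
    (add_comm (L.ω₁ / 3) _ ▸ ω₁_div_three_add_tauFixedPoint_notMem_lattice hL)
    (sub_mem_comm_iff.not.mp (ω₁_div_three_sub_tauFixedPoint_notMem_lattice hL))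
  have h_zeta : 3 * weierstrassZeta L (tauFixedPoint L) =
      (1 - tau ^ 2) * weierstrassZeta L L.ω₁ := by
    rw [← weierstrassZeta_tauFixedPoint hL]
    linear_combination weierstrassZeta L (tauFixedPoint L) * (tau_sq - tau_cube)
  rw [add_comm (tauFixedPoint L), weierstrassZeta_ω₁_div_three_add_tauFixedPoint hL,
    ← neg_sub (L.ω₁ / 3), weierstrassZeta_neg, weierstrassZeta_ω₁_div_three_sub_tauFixedPoint hL,
    weierstrassP_tauFixedPoint hL] at h
  linear_combination -3 * h + (tau - tau ^ 2) * weierstrassZeta_mul_weierstrassP_ω₁_div_three hL +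
    2 * ℘[L] (L.ω₁ / 3) * h_zeta - weierstrassZeta L L.ω₁ * ℘[L] (L.ω₁ / 3) * tau_sq

lemma derivWeierstrassP_ω₁_div_three_sq : ℘'[L] (L.ω₁ / 3) ^ 2 = 3 * L.g₃ := by
  have h := derivWeierstrassP_sq_of_hexagonal hL (tauFixedPoint_notMem_lattice hL)
  rw [weierstrassP_tauFixedPoint hL] at h
  have h_disc : (tau - tau ^ 2) ^ 2 = -3 := by linear_combination tau_sq + (tau - 2) * tau_cube
  linear_combination (3 * ℘'[L] (tauFixedPoint L) + (tau - tau ^ 2) * ℘'[L] (L.ω₁ / 3)) / 3 *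
    derivWeierstrassP_tauFixedPoint hL - 3 * h + ℘'[L] (L.ω₁ / 3) ^ 2 / 3 * h_disc

lemma weierstrassP_ω₁_div_three_cube : ℘[L] (L.ω₁ / 3) ^ 3 = L.g₃ := by
  linear_combination (derivWeierstrassP_ω₁_div_three_sq hL -
    derivWeierstrassP_sq_of_hexagonal hL (ω₁_div_three_notMem_lattice L)) / 4

lemma weierstrassP_ω₁_div_two_cube : 4 * ℘[L] (L.ω₁ / 2) ^ 3 = L.g₃ := by
  have h := derivWeierstrassP_sq_of_hexagonal hL L.ω₁_div_two_notMem_lattice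
  rw [derivWeierstrassP_half L ⟨_, L.ω₁_mem_lattice⟩] at h
  linear_combination -h

end

/-! ### The lattice `ω·ℤ[τ]` -/

section

open PeriodPair Set

lemma exists_weierstrassP_eq_ofReal {L : PeriodPair}
    (h : ∀ z, z ∈ L.lattice ↔ conj z ∈ L.lattice) {z : ℂ} (hz : conj z = z) :
    ∃ y : ℝ, ℘[L] z = y :=
  conj_eq_iff_real.mp (by rw [← weierstrassP_conj h, hz])

lemma exists_derivWeierstrassP_eq_ofReal {L : PeriodPair}
    (h : ∀ z, z ∈ L.lattice ↔ conj z ∈ L.lattice) {z : ℂ} (hz : conj z = z) :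
    ∃ y : ℝ, ℘'[L] z = y :=
  conj_eq_iff_real.mp (by rw [← derivWeierstrassP_conj h, hz])

lemma conj_tau : conj tau = -1 - tau := by
  rw [tau]
  simp only [map_div₀, map_add, map_neg, map_one, map_mul, conj_ofReal, conj_I, map_ofNat]
  ring

lemma linearIndependent_mul_tau {ω : ℝ} (hω : ω ≠ 0) :
    LinearIndependent ℝ ![(ω : ℂ), ω * tau] := by
  refine LinearIndependent.pair_iff.mpr fun s t h ↦ ?_
  have ht : t = 0 := by simpa [tau_im, hω] using congrArg Complex.im h
  subst ht
  simpa [hω] using h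

variable {ω : ℝ} (hω : 0 < ω)

/-- The period pair `(ω, ωτ)` of the lattice `L_ω = ω·ℤ[τ]`. -/
def eisensteinPair : PeriodPair := ⟨ω, ω * tau, linearIndependent_mul_tau hω.ne'⟩

namespace eisensteinPair

lemma mem_lattice_iff (z : ℂ) :
    z ∈ (eisensteinPair hω).lattice ↔ ∃ m n : ℤ, z = ω * (m + n * tau) := by
  simp only [PeriodPair.mem_lattice, eisensteinPair]
  refine exists₂_congr fun m n ↦ eq_comm.trans ?_
  rw [show (ω * (m + n * tau) : ℂ) = m * ω + n * (ω * tau) by ring]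

lemma mem_lattice_iff_conj_mem (z : ℂ) :
    z ∈ (eisensteinPair hω).lattice ↔ conj z ∈ (eisensteinPair hω).lattice := by
  have h_conj : ∀ w ∈ (eisensteinPair hω).lattice, conj w ∈ (eisensteinPair hω).lattice := by
    simp only [mem_lattice_iff]
    rintro _ ⟨m, n, rfl⟩
    refine ⟨m - n, -n, ?_⟩
    simp only [map_mul, map_add, conj_ofReal, map_intCast, conj_tau]
    push_cast
    ring
  exact ⟨h_conj z, fun h ↦ conj_conj z ▸ h_conj _ h⟩

lemma ofReal_notMem_lattice {x : ℝ} (hx : x ∈ Ioo 0 ω) :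
    (x : ℂ) ∉ (eisensteinPair hω).lattice := by
  rw [mem_lattice_iff]
  rintro ⟨m, n, h⟩
  have hn : n = 0 := by simpa [tau_im, hω.ne'] using congrArg Complex.im h
  have hm : x = ω * m := by simpa [hn] using congrArg Complex.re h
  have h_pos : (0 : ℝ) < m := pos_of_mul_pos_right (hm ▸ hx.1) hω.le
  have h_lt : (m : ℝ) < 1 := by nlinarith [hx.2]
  norm_cast at h_pos h_lt
  omega

lemma weierstrassP_ofReal_re_nonneg (hg : (eisensteinPair hω).g₃ = 1) {x : ℝ}
    (hx : x ∈ Ioo 0 ω) : 0 ≤ (℘[eisensteinPair hω] x).re := by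
  obtain ⟨y, hy⟩ :=
    exists_weierstrassP_eq_ofReal (mem_lattice_iff_conj_mem hω) (conj_ofReal x)
  obtain ⟨y', hy'⟩ :=
    exists_derivWeierstrassP_eq_ofReal (mem_lattice_iff_conj_mem hω) (conj_ofReal x)
  have h := derivWeierstrassP_sq_of_hexagonal rfl (ofReal_notMem_lattice hω hx)
  rw [hg, hy, hy'] at h
  norm_cast at h
  rw [hy, ofReal_re]
  refine (Odd.pow_nonneg_iff (by decide : Odd 3)).mp ?_
  linarith [sq_nonneg y']

lemma antitoneOn_weierstrassZeta_re (hg : (eisensteinPair hω).g₃ = 1) :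
    AntitoneOn (fun x : ℝ ↦ (weierstrassZeta (eisensteinPair hω) x).re) (Ioo 0 ω) := by
  have h_deriv (x : ℝ) (hx : x ∈ Ioo 0 ω) :
      HasDerivAt (fun x : ℝ ↦ (weierstrassZeta (eisensteinPair hω) x).re)
        (-℘[eisensteinPair hω] x).re x :=
    (hasDerivAt_weierstrassZeta _ (ofReal_notMem_lattice hω hx)).real_of_complex
  refine antitoneOn_of_hasDerivWithinAt_nonpos (convex_Ioo 0 ω)
    (fun x hx ↦ (h_deriv x hx).continuousAt.continuousWithinAt)
    (fun x hx ↦ (h_deriv x (interior_subset hx)).hasDerivWithinAt) fun x hx ↦ ?_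
  simpa only [neg_re, Left.neg_nonpos_iff] using
    weierstrassP_ofReal_re_nonneg hω hg (interior_subset hx)

lemma weierstrassP_third (hg : (eisensteinPair hω).g₃ = 1) :
    ℘[eisensteinPair hω] (ω / 3) = 1 := by
  obtain ⟨y, hy⟩ := exists_weierstrassP_eq_ofReal (mem_lattice_iff_conj_mem hω)
    (z := ω / 3) (by simp [map_ofNat])
  have h_cube : ℘[eisensteinPair hω] (ω / 3) ^ 3 = (eisensteinPair hω).g₃ :=
    weierstrassP_ω₁_div_three_cube rfl
  rw [hy, hg] at h_cube
  norm_cast at h_cube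
  rw [hy, ofReal_eq_one]
  exact (Odd.strictMono_pow (by decide : Odd 3)).injective (h_cube.trans (one_pow 3).symm)

lemma weierstrassP_half (hg : (eisensteinPair hω).g₃ = 1) :
    ℘[eisensteinPair hω] (ω / 2) = cbrt2 / 2 := by
  obtain ⟨y, hy⟩ := exists_weierstrassP_eq_ofReal (mem_lattice_iff_conj_mem hω)
    (z := ω / 2) (by simp [map_ofNat])
  have h_cube : 4 * ℘[eisensteinPair hω] (ω / 2) ^ 3 = (eisensteinPair hω).g₃ :=
    weierstrassP_ω₁_div_two_cube rfl
  have h_cbrt : ((2 : ℝ) ^ ((1 : ℝ) / 3)) ^ 3 = 2 := by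
    rw [← Real.rpow_mul_natCast zero_le_two]
    norm_num
  rw [hy, hg] at h_cube
  norm_cast at h_cube
  have h_eq : 2 * y = (2 : ℝ) ^ ((1 : ℝ) / 3) :=
    (Odd.strictMono_pow (by decide : Odd 3)).injective (by linear_combination 2 * h_cube - h_cbrt)
  rw [hy, cbrt2, ← h_eq]
  push_cast
  ring

lemma weierstrassZeta_period :
    weierstrassZeta (eisensteinPair hω) ω = ((2 * π / √3 / ω : ℝ) : ℂ) := by
  push_cast
  exact weierstrassZeta_ω₁_of_hexagonal rfl

lemma weierstrassZeta_period_re_pos : 0 < (weierstrassZeta (eisensteinPair hω) ω).re := by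
  rw [weierstrassZeta_period, ofReal_re]
  positivity

lemma weierstrassZeta_third_sub (hg : (eisensteinPair hω).g₃ = 1) :
    weierstrassZeta (eisensteinPair hω) ω - 3 * weierstrassZeta (eisensteinPair hω) (ω / 3) =
      ℘'[eisensteinPair hω] (ω / 3) := by
  have h := weierstrassZeta_mul_weierstrassP_ω₁_div_three (L := eisensteinPair hω) rfl
  rwa [show (eisensteinPair hω).ω₁ = ω from rfl, weierstrassP_third hω hg, mul_one] at h

lemma weierstrassZeta_period_re_le (hg : (eisensteinPair hω).g₃ = 1) :
    (weierstrassZeta (eisensteinPair hω) ω).re ≤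
      2 * (weierstrassZeta (eisensteinPair hω) (ω / 3)).re := by
  have h_half := congrArg Complex.re
    (two_mul_weierstrassZeta_half _ ⟨(ω : ℂ), (eisensteinPair hω).ω₁_mem_lattice⟩)
  have h_anti := antitoneOn_weierstrassZeta_re hω hg (a := ω / 3) (b := ω / 2)
    ⟨by linarith, by linarith⟩ ⟨by linarith, by linarith⟩ (by linarith)
  simp only [mul_re, re_ofNat, im_ofNat, zero_mul, sub_zero] at h_half
  push_cast at h_anti
  linarith

-- `℘'(ω/3)² = 3`, and `℘'(ω/3) = ζ(ω) - 3ζ(ω/3) ≤ -ζ(ω)/2` fixes the sign.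
lemma derivWeierstrassP_third (hg : (eisensteinPair hω).g₃ = 1) :
    ℘'[eisensteinPair hω] (ω / 3) = -√3 := by
  obtain ⟨y, hy⟩ := exists_derivWeierstrassP_eq_ofReal (mem_lattice_iff_conj_mem hω)
    (z := ω / 3) (by simp [map_ofNat])
  have h_sq : ℘'[eisensteinPair hω] (ω / 3) ^ 2 = 3 * (eisensteinPair hω).g₃ :=
    derivWeierstrassP_ω₁_div_three_sq rfl
  rw [hy, hg, mul_one] at h_sq
  norm_cast at h_sq
  have h_neg : y ≤ 0 := by
    have h_sub := weierstrassZeta_third_sub hω hg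
    rw [hy] at h_sub
    have h_sub_re := congrArg Complex.re h_sub
    simp only [sub_re, mul_re, re_ofNat, im_ofNat, zero_mul, sub_zero, ofReal_re] at h_sub_re
    linarith [weierstrassZeta_period_re_pos hω, weierstrassZeta_period_re_le hω hg]
  rw [hy, ← h_sq, Real.sqrt_sq_eq_abs, abs_of_nonpos h_neg, ofReal_neg, neg_neg]

end eisensteinPair

end

section

open PeriodPair

lemma mem_Eis_iff (a : ℂ) : a ∈ Eis ↔ ∃ m n : ℤ, a = m + n * tau := by
  constructor
  · intro h
    induction h using Subring.closure_induction with
    | mem x hx => exact ⟨0, 1, by simpa using hx⟩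
    | zero => exact ⟨0, 0, by simp⟩
    | one => exact ⟨1, 0, by simp⟩
    | add x y _ _ hx hy =>
      obtain ⟨⟨m, n, rfl⟩, k, l, rfl⟩ := hx, hy
      exact ⟨m + k, n + l, by push_cast; ring⟩
    | neg x _ hx =>
      obtain ⟨m, n, rfl⟩ := hx
      exact ⟨-m, -n, by push_cast; ring⟩
    | mul x y _ _ hx hy =>
      obtain ⟨⟨m, n, rfl⟩, k, l, rfl⟩ := hx, hy
      refine ⟨m * k - n * l, m * l + n * k - n * l, ?_⟩
      push_cast
      linear_combination (n * l : ℂ) * tau_sq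
  · rintro ⟨m, n, rfl⟩
    exact add_mem (intCast_mem _ m) (mul_mem (intCast_mem _ n) (Subring.subset_closure rfl))

variable {ω : ℝ} (hω : 0 < ω)

lemma inLattice_iff_mem_lattice (z : ℂ) : inLattice ω z ↔ z ∈ (eisensteinPair hω).lattice := by
  rw [eisensteinPair.mem_lattice_iff, inLattice]
  simp only [Subtype.exists, mem_Eis_iff, exists_prop]
  constructor
  · rintro ⟨_, ⟨m, n, rfl⟩, h⟩
    exact ⟨m, n, h⟩
  · rintro ⟨m, n, h⟩
    exact ⟨_, ⟨m, n, rfl⟩, h⟩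

lemma tsum_lattice_eq_add_tsum_inLattice {F : ℂ → ℂ}
    (hF : Summable fun l : (eisensteinPair hω).lattice ↦ F l) :
    ∑' l : (eisensteinPair hω).lattice, F l =
      F 0 + ∑' a : {w : ℂ // inLattice ω w ∧ w ≠ 0}, F a := by
  have h_union : ((eisensteinPair hω).lattice : Set ℂ) =
      {0} ∪ {w : ℂ | inLattice ω w ∧ w ≠ 0} := by
    ext w
    by_cases hw : w = 0 <;> simp [hw, inLattice_iff_mem_lattice hω]
  have h_subset : {w : ℂ | inLattice ω w ∧ w ≠ 0} ⊆ (eisensteinPair hω).lattice :=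
    h_union ▸ Set.subset_union_right
  calc ∑' l : (eisensteinPair hω).lattice, F l
    _ = ∑' l : ({0} ∪ {w : ℂ | inLattice ω w ∧ w ≠ 0} : Set ℂ), F l :=
      tsum_congr_set_coe F h_union
    _ = ∑' l : ({0} : Set ℂ), F l + ∑' a : {w : ℂ | inLattice ω w ∧ w ≠ 0}, F a :=
      Summable.tsum_union_disjoint (by simp) .of_finite
        (hF.comp_injective (Set.inclusion_injective h_subset))
    _ = F 0 + ∑' a : {w : ℂ // inLattice ω w ∧ w ≠ 0}, F a := by
      rw [tsum_singleton]
      rfl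

lemma wp_eq_weierstrassP : wp ω = ℘[eisensteinPair hω] := by
  funext z
  rw [weierstrassP, tsum_lattice_eq_add_tsum_inLattice hω
    (F := fun l ↦ 1 / (z - l) ^ 2 - 1 / l ^ 2) ((eisensteinPair hω).hasSum_weierstrassP z).summable]
  simp [wp]

lemma wzeta_eq_weierstrassZeta : wzeta ω = weierstrassZeta (eisensteinPair hω) := by
  funext z
  rw [weierstrassZeta, tsum_lattice_eq_add_tsum_inLattice hω
    (F := fun l ↦ weierstrassZetaTerm l z) (summable_weierstrassZetaTerm _ z)]
  simp [wzeta, weierstrassZetaTerm]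

lemma g₃_eq_one_of_deriv_wp_sq
    (hODE : ∀ z : ℂ, ¬ inLattice ω z → deriv (wp ω) z ^ 2 = 4 * wp ω z ^ 3 - 1) :
    (eisensteinPair hω).g₃ = 1 := by
  have h_notMem := (eisensteinPair hω).ω₁_div_two_notMem_lattice
  have h := hODE _ ((inLattice_iff_mem_lattice hω _).not.mpr h_notMem)
  rw [wp_eq_weierstrassP hω, deriv_weierstrassP,
    derivWeierstrassP_sq_of_hexagonal rfl h_notMem] at h
  linear_combination -h

end

section

open PeriodPair

variable {ω : ℝ} (hω : 0 < ω)

namespace eisensteinPair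

lemma weierstrassZeta_third (hg : (eisensteinPair hω).g₃ = 1) :
    weierstrassZeta (eisensteinPair hω) (ω / 3) =
      (weierstrassZeta (eisensteinPair hω) ω + √3) / 3 := by
  linear_combination -(derivWeierstrassP_third hω hg + weierstrassZeta_third_sub hω hg) / 3

lemma weierstrassZeta_five_sixths_mul (hg : (eisensteinPair hω).g₃ = 1) :
    (2 * weierstrassZeta (eisensteinPair hω) (5 * ω / 6) - weierstrassZeta (eisensteinPair hω) ω -
      2 * weierstrassZeta (eisensteinPair hω) (ω / 3)) * (1 - cbrt2 / 2) = -√3 := by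
  have h_add : (ω / 3 + ω / 2 : ℂ) = 5 * ω / 6 := by ring
  have h_sub : (ω / 3 - ω / 2 : ℂ) = 5 * ω / 6 - ω := by ring
  have h_mem : (ω : ℂ) ∈ (eisensteinPair hω).lattice := (eisensteinPair hω).ω₁_mem_lattice
  have h_notMem : (5 * ω / 6 : ℂ) ∉ (eisensteinPair hω).lattice := by
    simpa using ofReal_notMem_lattice hω (x := 5 * ω / 6) ⟨by linarith, by linarith⟩
  have h := weierstrassZeta_addition (eisensteinPair hω) (z := ω / 3) (v := ω / 2)
    (ω₁_div_three_notMem_lattice _) (ω₁_div_two_notMem_lattice _) (by rwa [h_add])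
    (by rwa [h_sub, Submodule.sub_mem_iff_left _ h_mem])
  rw [h_add, h_sub, weierstrassZeta_sub_coe _ _ ⟨_, h_mem⟩, weierstrassP_third hω hg,
    weierstrassP_half hω hg, derivWeierstrassP_third hω hg] at h
  linear_combination h

lemma weierstrassZeta_five_sixths (hg : (eisensteinPair hω).g₃ = 1) :
    weierstrassZeta (eisensteinPair hω) (5 * ω / 6) =
      5 * π / (3 * √3 * ω) + 1 / √3 + √3 / (cbrt2 - 2) := by
  have h := weierstrassZeta_five_sixths_mul hω hg
  have h_cbrt : cbrt2 - 2 ≠ 0 := fun h0 ↦ sqrt_three_ne_zero <| by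
    rw [show 1 - cbrt2 / 2 = 0 by linear_combination -h0 / 2, mul_zero] at h
    exact neg_eq_zero.mp h.symm
  have h_inv : (1 / √3 : ℂ) = √3 / 3 := by
    rw [div_eq_div_iff sqrt_three_ne_zero three_ne_zero]
    linear_combination -sqrt_three_sq
  have h_div : √3 / (cbrt2 - 2) = weierstrassZeta (eisensteinPair hω) (5 * ω / 6) -
      5 / 6 * weierstrassZeta (eisensteinPair hω) ω - √3 / 3 := by
    rw [weierstrassZeta_third hω hg] at h
    rw [div_eq_iff h_cbrt]
    linear_combination h
  rw [h_div, h_inv, weierstrassZeta_period]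
  push_cast
  ring

end eisensteinPair

end

/-- From [Qiu], (2.8): `ζ(5ω/6) = 5π/(3√3·ω) + 1/√3 + √3/(∛2 − 2)`.
Here `ω > 0` is pinned down by the differential equation `℘′² = 4℘³ − 1` for the
lattice `L_ω = ω·ℤ[τ]` (equivalently, the lattice invariants are `g₂ = 0`, `g₃ = 1`). -/
theorem wzeta_value_at_five_sixths
    (ω : ℝ) (hω : 0 < ω)
    (hODE : ∀ z : ℂ, ¬ inLattice ω z → deriv (wp ω) z ^ 2 = 4 * wp ω z ^ 3 - 1) :
    wzeta ω (5 * (ω : ℂ) / 6) =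
      5 * (Real.pi : ℂ) / (3 * (Real.sqrt 3 : ℂ) * (ω : ℂ)) + 1 / (Real.sqrt 3 : ℂ) +
        (Real.sqrt 3 : ℂ) / (cbrt2 - 2) := by
  rw [wzeta_eq_weierstrassZeta hω]
  exact eisensteinPair.weierstrassZeta_five_sixths hω (g₃_eq_one_of_deriv_wp_sq hω hODE)
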